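/- Let φ : [0,δ] → ℝ be continuous, strictly increasing with φ(0)=0 and φ(t)>0 for t ∈ (0,δ]. Then there exists a smooth even function ψ : [-1,1] → ℝ with ψ(0)=0, ψ(x)>0 for x ≠ 0, and ψ(x) = O(x·φ⁻¹(x)) as x → 0⁺. -/

import Mathlib

open Set Asymptotics

/-!
The inverse `σ` of `φ` takes values in `[0, δ]`, and continuity of `φ` at `0` forces `σ` to be
bounded away from `0` on `[a, φ δ]` for every `a > 0`: small arguments of `φ` have values below `a`.
So `x * σ (min x (φ δ))`, which is `x * σ x` on `(0, φ δ]`, has a positive lower bound near every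
`x > 0`, and it suffices to find a smooth function below any `g` that has a positive lower bound
near every point of an open set `U`. Near each point of `U` a multiple of a bump function lies below
`g`. Countably many of these have supports covering `U`, and a combination of them with positive
coefficients of sum at most `1` stays below `g`; if the coefficients also decay fast enough, then
the series of derivatives of every order converge uniformly and the sum is smooth on the whole
space. Taking `U = (0, ∞)` and symmetrizing gives `ψ`.
-/

open Filter Function
open scoped ContDiff Topology

section SmallMultiples

variable {𝕜 E F : Type*} [NontriviallyNormedField 𝕜] [NormedAddCommGroup E] [NormedSpace 𝕜 E]
  [NormedAddCommGroup F] [NormedSpace 𝕜 F]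

theorem eventually_forall_norm_iteratedFDeriv_const_smul_le {f : E → F} {k : ℕ}
    (hf : ContDiff 𝕜 k f) (hs : HasCompactSupport f) {ε : ℝ} (hε : 0 < ε) :
    ∀ᶠ c : 𝕜 in 𝓝 0, ∀ x, ‖iteratedFDeriv 𝕜 k (c • f) x‖ ≤ ε := by
  obtain ⟨B, hB⟩ := (hf.continuous_iteratedFDeriv le_rfl).bounded_above_of_compact_support
    (hs.iteratedFDeriv k)
  have hlim : Tendsto (fun c : 𝕜 => ‖c‖ * B) (𝓝 0) (𝓝 0) := by
    simpa only [norm_zero, zero_mul] using (tendsto_norm_zero (E := 𝕜)).mul_const B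
  filter_upwards [hlim.eventually_le_const hε] with c hc x
  calc ‖iteratedFDeriv 𝕜 k (c • f) x‖ = ‖c‖ * ‖iteratedFDeriv 𝕜 k f x‖ := by
        rw [iteratedFDeriv_const_smul_apply hf.contDiffAt, norm_smul]
    _ ≤ ‖c‖ * B := by gcongr; exact hB x
    _ ≤ ε := hc

end SmallMultiples

section Series

variable {ι E F : Type*} [NormedAddCommGroup E] [NormedSpace ℝ E] [NormedAddCommGroup F]
  [NormedSpace ℝ F]

theorem exists_mem_Ioc_forall_norm_iteratedFDeriv_smul_le {f : E → F} {n : ℕ}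
    (hf : ContDiff ℝ n f) (hs : HasCompactSupport f) {ε : ℝ} (hε : 0 < ε) :
    ∃ c ∈ Ioc 0 ε, ∀ k ≤ n, ∀ x, ‖iteratedFDeriv ℝ k (c • f) x‖ ≤ ε := by
  have hderiv : ∀ᶠ c : ℝ in 𝓝 0, ∀ k ∈ Iic n, ∀ x, ‖iteratedFDeriv ℝ k (c • f) x‖ ≤ ε :=
    (eventually_all_finite (finite_Iic n)).2 fun k hk =>
      eventually_forall_norm_iteratedFDeriv_const_smul_le (hf.of_le (mod_cast hk)) hs hε
  obtain ⟨c, hc, hcε⟩ :=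
    ((hderiv.filter_mono nhdsWithin_le_nhds).and (Ioc_mem_nhdsGT hε)).exists
  exact ⟨c, hcε, hc⟩

theorem exists_mem_Ioc_contDiff_tsum_smul [Countable ι] [CompleteSpace F] {f : ι → E → F}
    (hf : ∀ i, ContDiff ℝ ∞ (f i)) (hs : ∀ i, HasCompactSupport (f i)) {u : ι → ℝ}
    (hu₀ : ∀ i, 0 < u i) (hu : Summable u) :
    ∃ c : ι → ℝ, (∀ i, c i ∈ Ioc 0 (u i)) ∧ ContDiff ℝ ∞ fun x => ∑' i, c i • f i x := by
  obtain ⟨e, he⟩ := exists_injective_nat ι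
  choose c hcu hc using fun i =>
    exists_mem_Ioc_forall_norm_iteratedFDeriv_smul_le (n := e i)
      ((hf i).of_le (mod_cast le_top)) (hs i) (hu₀ i)
  refine ⟨c, hcu, contDiff_tsum_of_eventually (v := fun _ => u)
    (fun i => (hf i).const_smul (c i)) (fun _ _ => hu) fun k _ => ?_⟩
  have hlarge : ∀ᶠ i in cofinite, k ≤ e i :=
    he.tendsto_cofinite.eventually (Nat.cofinite_eq_atTop ▸ eventually_ge_atTop k)
  exact hlarge.mono fun i hi => hc i k hi

theorem exists_contDiff_support_eq_iUnion_le [Countable ι] {f : ι → E → ℝ} {g : E → ℝ}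
    (hf : ∀ i, ContDiff ℝ ∞ (f i)) (hs : ∀ i, HasCompactSupport (f i)) (hf₀ : ∀ i x, 0 ≤ f i x)
    (hfg : ∀ i, ∀ x ∈ support (f i), f i x ≤ g x) :
    ∃ F : E → ℝ, ContDiff ℝ ∞ F ∧ support F = ⋃ i, support (f i) ∧ (∀ x, 0 ≤ F x) ∧
      ∀ x ∈ support F, F x ≤ g x := by
  obtain ⟨u, hu₀, C, hu, hC⟩ := NNReal.exists_pos_sum_of_countable one_ne_zero ι
  replace hu : HasSum (fun i => (u i : ℝ)) C := NNReal.hasSum_coe.2 hu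
  obtain ⟨c, hc, hF⟩ :=
    exists_mem_Ioc_contDiff_tsum_smul hf hs (u := fun i => u i) hu₀ hu.summable
  set F : E → ℝ := fun x => ∑' i, c i • f i x
  have hterm₀ : ∀ x i, 0 ≤ c i • f i x := fun x i => mul_nonneg (hc i).1.le (hf₀ i x)
  have hbound : ∀ x ∈ ⋃ i, support (f i), Summable (fun i => c i • f i x) ∧ F x ≤ g x := by
    intro x hx
    obtain ⟨j, hj⟩ := mem_iUnion.1 hx
    have hg₀ : 0 ≤ g x := (hf₀ j x).trans (hfg j x hj)
    have hterm_le : ∀ i, c i • f i x ≤ u i * g x := fun i => by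
      by_cases hi : f i x = 0
      · rw [hi, smul_zero]
        positivity
      · exact mul_le_mul (hc i).2 (hfg i x hi) (hf₀ i x) (u i).2
    have hsum := Summable.of_nonneg_of_le (hterm₀ x) hterm_le (hu.summable.mul_right (g x))
    exact ⟨hsum, (hasSum_le hterm_le hsum.hasSum (hu.mul_right (g x))).trans
      (mul_le_of_le_one_left hg₀ hC.le)⟩
  have hsupp : support F = ⋃ i, support (f i) := by
    refine Subset.antisymm (support_subset_iff'.2 fun x hx => ?_) fun x hx => ?_
    · have hzero : ∀ i, f i x = 0 := by
        simpa only [mem_iUnion, mem_support, not_exists, not_not] using hx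
      simp only [F, hzero, smul_zero, tsum_zero]
    · obtain ⟨j, hj⟩ := mem_iUnion.1 hx
      have hpos : 0 < f j x := (hf₀ j x).lt_of_ne' hj
      exact ((hbound x hx).1.tsum_pos (hterm₀ x) j (mul_pos (hc j).1 hpos)).ne'
  exact ⟨F, hF, hsupp, fun x => tsum_nonneg (hterm₀ x), fun x hx => (hbound x (hsupp ▸ hx)).2⟩

end Series

section Minorant

variable {E : Type*} [NormedAddCommGroup E] [NormedSpace ℝ E] [FiniteDimensional ℝ E]

theorem exists_contDiff_hasCompactSupport_le {g : E → ℝ} {s : Set E} {x : E} (hs : s ∈ 𝓝 x)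
    (hg : ∃ m > 0, ∀ᶠ y in 𝓝 x, m ≤ g y) :
    ∃ f : E → ℝ, ContDiff ℝ ∞ f ∧ HasCompactSupport f ∧ support f ⊆ s ∧
      (∀ y, 0 ≤ f y) ∧ 0 < f x ∧ ∀ y ∈ support f, f y ≤ g y := by
  obtain ⟨m, hm, hmg⟩ := hg
  obtain ⟨χ, hχs, hχc, hχ, hχ01, hχx⟩ :=
    exists_contDiff_tsupport_subset (n := ⊤) (inter_mem hs hmg)
  have hsub : support (m • χ) ⊆ s ∩ {y | m ≤ g y} :=
    (support_const_smul_subset m χ).trans ((subset_tsupport χ).trans hχs)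
  have hχ_mem : ∀ y, χ y ∈ Icc 0 1 := fun y => hχ01 (mem_range_self y)
  exact ⟨m • χ, hχ.const_smul m, hχc.smul_left, hsub.trans inter_subset_left,
    fun y => mul_nonneg hm.le (hχ_mem y).1, mul_pos hm (hχx ▸ one_pos),
    fun y hy => (mul_le_of_le_one_right hm.le (hχ_mem y).2).trans (hsub hy).2⟩

theorem exists_contDiff_support_eq_le {g : E → ℝ} {U : Set E} (hU : IsOpen U)
    (hg : ∀ x ∈ U, ∃ m > 0, ∀ᶠ y in 𝓝 x, m ≤ g y) :
    ∃ f : E → ℝ, ContDiff ℝ ∞ f ∧ support f = U ∧ (∀ x, 0 ≤ f x) ∧ ∀ x ∈ U, f x ≤ g x := by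
  choose f hf hfc hfU hf₀ hfx hfg using fun x : U =>
    exists_contDiff_hasCompactSupport_le (hU.mem_nhds x.2) (hg x x.2)
  have hcover : ⋃ x, support (f x) = U :=
    (iUnion_subset hfU).antisymm fun x hx => mem_iUnion.2 ⟨⟨x, hx⟩, (hfx ⟨x, hx⟩).ne'⟩
  obtain ⟨T, hT, hTU⟩ := TopologicalSpace.isOpen_iUnion_countable (fun x => support (f x))
    fun x => (hf x).continuous.isOpen_support
  have : Countable T := hT.to_subtype
  obtain ⟨F, hF, hFs, hF₀, hFg⟩ := exists_contDiff_support_eq_iUnion_le (f := fun i : T => f i)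
    (fun i => hf i) (fun i => hfc i) (fun i => hf₀ i) (fun i => hfg i)
  have hFU : support F = U := by
    rw [hFs, ← biUnion_eq_iUnion T fun x _ => support (f x), hTU, hcover]
  exact ⟨F, hF, hFU, hF₀, fun x hx => hFg x (hFU ▸ hx)⟩

end Minorant

theorem exists_even_contDiff_pos_le {g : ℝ → ℝ}
    (hg : ∀ x > 0, ∃ m > 0, ∀ᶠ y in 𝓝 x, m ≤ g y) :
    ∃ ψ : ℝ → ℝ, ContDiff ℝ ∞ ψ ∧ (∀ x, ψ (-x) = ψ x) ∧ ψ 0 = 0 ∧ (∀ x ≠ 0, 0 < ψ x) ∧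
      ∀ x > 0, ψ x ≤ g x := by
  obtain ⟨f, hf, hfs, hf₀, hfg⟩ := exists_contDiff_support_eq_le isOpen_Ioi hg
  have hzero : ∀ x ≤ 0, f x = 0 := fun x hx => notMem_support.1 (by rw [hfs]; exact hx.not_gt)
  have hpos : ∀ x > 0, 0 < f x := fun x hx => (hf₀ x).lt_of_ne' (by rwa [← mem_support, hfs])
  refine ⟨fun x => f x + f (-x), hf.add (hf.comp contDiff_neg), fun x => ?_, ?_, fun x hx => ?_,
    fun x hx => ?_⟩
  · simp only [neg_neg, add_comm]
  · simp only [neg_zero, hzero 0 le_rfl, add_zero]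
  · rcases hx.lt_or_gt with hx | hx
    · exact add_pos_of_nonneg_of_pos (hf₀ x) (hpos _ (neg_pos.2 hx))
    · exact add_pos_of_pos_of_nonneg (hpos x hx) (hf₀ (-x))
  · simpa only [hzero (-x) (neg_nonpos.2 (le_of_lt hx)), add_zero] using hfg x hx

section RightInverse

theorem exists_pos_forall_le_dist_of_continuousWithinAt {X Y : Type*} [PseudoMetricSpace X]
    [TopologicalSpace Y] [LinearOrder Y] [ClosedIciTopology Y] {f : X → Y} {s : Set X} {x : X}
    (hf : ContinuousWithinAt f s x) {a : Y} (ha : f x < a) :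
    ∃ η > 0, ∀ y ∈ s, a ≤ f y → η ≤ dist y x := by
  obtain ⟨η, hη, hball⟩ := Metric.mem_nhdsWithin_iff.1 (hf.eventually_lt_const ha)
  exact ⟨η, hη, fun y hy hay => not_lt.1 fun hlt => hay.not_gt (hball ⟨hlt, hy⟩)⟩

variable {φ σ : ℝ → ℝ} {s : Set ℝ} {b : ℝ}

theorem exists_pos_eventually_le_mul_rightInvOn_min (hs : s ⊆ Ici 0)
    (hφ : ContinuousWithinAt φ s 0) (hφ₀ : φ 0 = 0) (hb : 0 < b) (hσs : MapsTo σ (Ioc 0 b) s)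
    (hσ : RightInvOn σ φ (Ioc 0 b)) {x : ℝ} (hx : 0 < x) :
    ∃ m > 0, ∀ᶠ y in 𝓝 x, m ≤ y * σ (min y b) := by
  obtain ⟨η, hη, hηφ⟩ := exists_pos_forall_le_dist_of_continuousWithinAt hφ
    (hφ₀.trans_lt (lt_min (half_pos hx) hb))
  refine ⟨x / 2 * η, mul_pos (half_pos hx) hη, ?_⟩
  filter_upwards [eventually_gt_nhds (half_lt_self hx)] with y hy
  have hmem : min y b ∈ Ioc 0 b := ⟨lt_min ((half_pos hx).trans hy) hb, min_le_right y b⟩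
  have hησ : η ≤ σ (min y b) := by
    have hdist := hηφ _ (hσs hmem) ((min_le_min_right b hy.le).trans_eq (hσ hmem).symm)
    rwa [Real.dist_0_eq_abs, abs_of_nonneg (hs (hσs hmem))] at hdist
  exact mul_le_mul hy.le hησ hη.le ((half_pos hx).trans hy).le

theorem exists_even_contDiff_pos_isBigO_mul_rightInvOn (hs : s ⊆ Ici 0)
    (hφ : ContinuousWithinAt φ s 0) (hφ₀ : φ 0 = 0) (hb : 0 < b) (hσs : MapsTo σ (Ioc 0 b) s)
    (hσ : RightInvOn σ φ (Ioc 0 b)) :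
    ∃ ψ : ℝ → ℝ, ContDiff ℝ ∞ ψ ∧ (∀ x, ψ (-x) = ψ x) ∧ ψ 0 = 0 ∧ (∀ x ≠ 0, 0 < ψ x) ∧
      ψ =O[𝓝[>] 0] fun x => x * σ x := by
  obtain ⟨ψ, hψ, heven, hψ₀, hpos, hle⟩ := exists_even_contDiff_pos_le fun x hx =>
    exists_pos_eventually_le_mul_rightInvOn_min hs hφ hφ₀ hb hσs hσ hx
  refine ⟨ψ, hψ, heven, hψ₀, hpos, .of_bound' ?_⟩
  filter_upwards [Ioc_mem_nhdsGT hb] with x hx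
  have hψx : ψ x ≤ x * σ x := by simpa only [min_eq_left hx.2] using hle x hx.1
  exact abs_le_abs_of_nonneg (hpos x hx.1.ne').le hψx

end RightInverse

theorem stmt5_general (δ : ℝ) (hδ : 0 ≤ δ) (φ : ℝ → ℝ) (hφc : ContinuousOn φ (Icc 0 δ))
    (hφ0 : φ 0 = 0) (hφδ : 0 < φ δ) :
    ∃ ψ : ℝ → ℝ, ContDiff ℝ (⊤ : ℕ∞) ψ ∧ (∀ x, ψ (-x) = ψ x) ∧ ψ 0 = 0 ∧
      (∀ x ≠ 0, 0 < ψ x) ∧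
      ψ =O[nhdsWithin 0 (Ioi 0)]
        (fun x => x * Function.invFunOn φ (Icc 0 δ) x) := by
  have hsurj : SurjOn φ (Icc 0 δ) (Icc 0 (φ δ)) := by
    simpa only [SurjOn, hφ0] using intermediate_value_Icc hδ hφc
  have hsurj' : SurjOn φ (Icc 0 δ) (Ioc 0 (φ δ)) := hsurj.mono Subset.rfl Ioc_subset_Icc_self
  exact exists_even_contDiff_pos_isBigO_mul_rightInvOn Icc_subset_Ici_self
    (hφc 0 (left_mem_Icc.2 hδ)) hφ0 hφδ hsurj'.mapsTo_invFunOn hsurj'.rightInvOn_invFunOn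

theorem stmt5 (δ : ℝ) (hδ : 0 < δ) (φ : ℝ → ℝ)
    (hφc : ContinuousOn φ (Icc 0 δ)) (hφmono : StrictMonoOn φ (Icc 0 δ))
    (hφ0 : φ 0 = 0) (hφpos : ∀ t ∈ Ioc 0 δ, 0 < φ t) :
    ∃ ψ : ℝ → ℝ, ContDiff ℝ (⊤ : ℕ∞) ψ ∧ (∀ x, ψ (-x) = ψ x) ∧ ψ 0 = 0 ∧
      (∀ x ∈ Icc (-1:ℝ) 1, x ≠ 0 → 0 < ψ x) ∧
      ψ =O[nhdsWithin 0 (Ioi 0)]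
        (fun x => x * Function.invFunOn φ (Icc 0 δ) x) := by
  obtain ⟨ψ, hψ, heven, hψ0, hpos, hO⟩ :=
    stmt5_general δ hδ.le φ hφc hφ0 (hφpos δ (right_mem_Ioc.2 hδ))
  exact ⟨ψ, hψ, heven, hψ0, fun x _ => hpos x, hO⟩
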